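/- arXiv:2512.01240 — 2 statements merged into one kernel-verified Lean document; each statement's English description precedes it below -/
import Mathlib

section
/- Let E be a finite set, C > 0 a real number, p ∈ (0,1], and w : E → ℝ with 0 ≤ w_i ≤ C for every i ∈ E. Let R be the p-sampled active set of E and set μ := p·(∑_{i∈E} w_i)/C. If μ > 1, then Pr[∑_{i∈R} w_i < C] ≤ exp(−(μ−1)²/(2μ)). -/
open Finset

open scoped Classical in
/-- Probability, under independent `p`-sampling of the elements of `E`, that the random
active set `R ⊆ E` satisfies the predicate `pred`. -/
noncomputable def samplePr {ι : Type*} [DecidableEq ι] (E : Finset ι) (p : ℝ)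
    (pred : Finset ι → Prop) : ℝ :=
  ∑ A ∈ E.powerset, if pred A then p ^ A.card * (1 - p) ^ (E.card - A.card) else 0

/-!
Chernoff's method for the lower tail. For a tilt `t ≥ 0`, Markov's inequality applied to the random
variable `exp (-t ∑_{i ∈ R} wᵢ)`, whose expectation factors over `E`, reduces the claim to one
factor at a time. Because `0 ≤ wᵢ ≤ C`, the second-order bound `exp (-y) ≤ 1 - y + y² / 2` turns
each factor into the exponential of a multiple of `wᵢ`. With `m` the expected weight and `a` the
threshold, the resulting exponent `t a - m (t - C t² / 2)` is minimal at `t = (m - a) / (C m)`.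
-/

lemma exp_neg_le_one_sub_add_sq_div_two {y : ℝ} (hy : 0 ≤ y) :
    Real.exp (-y) ≤ 1 - y + y ^ 2 / 2 := by
  have hquad : 0 < 1 - y + y ^ 2 / 2 := by nlinarith [sq_nonneg (y - 1)]
  rw [Real.exp_neg]
  refine inv_le_of_inv_le₀ hquad (le_trans ?_ (Real.quadratic_le_exp_of_nonneg hy))
  have hprod : (1 + y + y ^ 2 / 2) * (1 - y + y ^ 2 / 2) = 1 + y ^ 4 / 4 := by ring
  rw [inv_le_iff_one_le_mul₀ hquad, hprod]
  exact le_add_of_nonneg_right (by positivity)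

lemma pow_mul_one_sub_pow_nonneg {p : ℝ} (hp : p ∈ Set.Icc (0 : ℝ) 1) (m n : ℕ) :
    0 ≤ p ^ m * (1 - p) ^ n :=
  mul_nonneg (pow_nonneg hp.1 m) (pow_nonneg (sub_nonneg.2 hp.2) n)

lemma bernoulli_mgf_neg_le {p t x C : ℝ} (hp : 0 ≤ p) (ht : 0 ≤ t) (hx : 0 ≤ x) (hxC : x ≤ C) :
    p * Real.exp (-(t * x)) + (1 - p) ≤ Real.exp (-(p * x * (t - C * t ^ 2 / 2))) := by
  have hsq : (t * x) ^ 2 ≤ C * t ^ 2 * x :=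
    calc (t * x) ^ 2 = x * (t ^ 2 * x) := by ring
      _ ≤ C * (t ^ 2 * x) := by gcongr
      _ = C * t ^ 2 * x := by ring
  calc p * Real.exp (-(t * x)) + (1 - p)
      ≤ p * (1 - t * x + (t * x) ^ 2 / 2) + (1 - p) := by
        gcongr
        exact exp_neg_le_one_sub_add_sq_div_two (mul_nonneg ht hx)
    _ ≤ p * (1 - t * x + C * t ^ 2 * x / 2) + (1 - p) := by gcongr
    _ = -(p * x * (t - C * t ^ 2 / 2)) + 1 := by ring
    _ ≤ Real.exp (-(p * x * (t - C * t ^ 2 / 2))) := Real.add_one_le_exp _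

/-- The expectation of `f R` for the random active set `R` under independent `p`-sampling of `E`,
as the explicit finite sum matching `samplePr`. -/
noncomputable def sampleExp {ι : Type*} (E : Finset ι) (p : ℝ) (f : Finset ι → ℝ) : ℝ :=
  ∑ A ∈ E.powerset, p ^ A.card * (1 - p) ^ (E.card - A.card) * f A

lemma sampleExp_prod {ι : Type*} (E : Finset ι) (p : ℝ) (g : ι → ℝ) :
    sampleExp E p (fun A => ∏ i ∈ A, g i) = ∏ i ∈ E, (p * g i + (1 - p)) := by
  classical
  rw [prod_add, sampleExp]
  refine sum_congr rfl fun A hA => ?_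
  rw [prod_mul_distrib, prod_const, prod_const, card_sdiff_of_subset (mem_powerset.1 hA)]
  ring

section Sampling

variable {ι : Type*} [DecidableEq ι] {E : Finset ι} {p : ℝ}

lemma samplePr_mono {P Q : Finset ι → Prop} (hp : p ∈ Set.Icc (0 : ℝ) 1)
    (hPQ : ∀ A ⊆ E, P A → Q A) : samplePr E p P ≤ samplePr E p Q := by
  refine sum_le_sum fun A hA => ?_
  have hweight : 0 ≤ p ^ A.card * (1 - p) ^ (E.card - A.card) :=
    pow_mul_one_sub_pow_nonneg hp _ _
  have hA' := hPQ A (mem_powerset.1 hA)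
  split_ifs with hP hQ hQ
  exacts [le_rfl, absurd (hA' hP) hQ, hweight, le_rfl]

lemma mul_samplePr_le_sampleExp {P : Finset ι → Prop} {f : Finset ι → ℝ} {c : ℝ}
    (hp : p ∈ Set.Icc (0 : ℝ) 1) (hf : ∀ A ⊆ E, 0 ≤ f A) (hPf : ∀ A ⊆ E, P A → c ≤ f A) :
    c * samplePr E p P ≤ sampleExp E p f := by
  rw [samplePr, sampleExp, mul_sum]
  refine sum_le_sum fun A hA => ?_
  have hAE := mem_powerset.1 hA
  have hweight : 0 ≤ p ^ A.card * (1 - p) ^ (E.card - A.card) :=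
    pow_mul_one_sub_pow_nonneg hp _ _
  split_ifs with hP
  · rw [mul_comm c]
    exact mul_le_mul_of_nonneg_left (hPf A hAE hP) hweight
  · rw [mul_zero]
    exact mul_nonneg hweight (hf A hAE)

lemma samplePr_sum_le_le_exp_mul_prod (hp : p ∈ Set.Icc (0 : ℝ) 1) (w : ι → ℝ) (a : ℝ) {t : ℝ}
    (ht : 0 ≤ t) :
    samplePr E p (fun A => ∑ i ∈ A, w i ≤ a) ≤
      Real.exp (t * a) * ∏ i ∈ E, (p * Real.exp (-(t * w i)) + (1 - p)) := by
  have hmarkov : Real.exp (-(t * a)) * samplePr E p (fun A => ∑ i ∈ A, w i ≤ a) ≤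
      sampleExp E p (fun A => ∏ i ∈ A, Real.exp (-(t * w i))) := by
    refine mul_samplePr_le_sampleExp hp (fun A _ => by positivity) fun A _ hA => ?_
    rw [← Real.exp_sum, sum_neg_distrib, ← mul_sum]
    gcongr
  rwa [sampleExp_prod, Real.exp_neg, inv_mul_le_iff₀ (Real.exp_pos _)] at hmarkov

lemma samplePr_sum_le_le_exp {w : ι → ℝ} {C t : ℝ} (hp : p ∈ Set.Icc (0 : ℝ) 1)
    (hw : ∀ i ∈ E, w i ∈ Set.Icc 0 C) (a : ℝ) (ht : 0 ≤ t) :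
    samplePr E p (fun A => ∑ i ∈ A, w i ≤ a) ≤
      Real.exp (t * a - p * (∑ i ∈ E, w i) * (t - C * t ^ 2 / 2)) :=
  calc samplePr E p (fun A => ∑ i ∈ A, w i ≤ a)
      ≤ Real.exp (t * a) * ∏ i ∈ E, (p * Real.exp (-(t * w i)) + (1 - p)) :=
        samplePr_sum_le_le_exp_mul_prod hp w a ht
    _ ≤ Real.exp (t * a) * ∏ i ∈ E, Real.exp (-(p * w i * (t - C * t ^ 2 / 2))) := by
        gcongr with i hi
        · exact fun j _ => add_nonneg (mul_nonneg hp.1 (Real.exp_pos _).le) (sub_nonneg.2 hp.2)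
        · exact bernoulli_mgf_neg_le hp.1 ht (hw i hi).1 (hw i hi).2
    _ = Real.exp (t * a - p * (∑ i ∈ E, w i) * (t - C * t ^ 2 / 2)) := by
        rw [← Real.exp_sum, sum_neg_distrib, ← sum_mul, ← mul_sum, ← Real.exp_add,
          ← sub_eq_add_neg]

theorem active_weight_chernoff_general {w : ι → ℝ} {C a : ℝ} (hC : 0 < C)
    (hp : p ∈ Set.Icc (0 : ℝ) 1) (hw : ∀ i ∈ E, w i ∈ Set.Icc 0 C)
    (hmean : 0 < p * ∑ i ∈ E, w i) (ha : a ≤ p * ∑ i ∈ E, w i) :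
    samplePr E p (fun A => ∑ i ∈ A, w i ≤ a) ≤
      Real.exp (-(p * (∑ i ∈ E, w i) - a) ^ 2 / (2 * C * (p * ∑ i ∈ E, w i))) := by
  set m := p * ∑ i ∈ E, w i with hm
  have ht : 0 ≤ (m - a) / (C * m) := div_nonneg (sub_nonneg.2 ha) (mul_pos hC hmean).le
  refine (samplePr_sum_le_le_exp hp hw a ht).trans_eq ?_
  rw [← hm]
  congr 1
  field_simp
  ring

end Sampling

/-- If `μ := p·(∑_{i∈E} wᵢ)/C > 1`, then the probability that the active weight is
below `C` is at most `exp(-(μ-1)²/(2μ))`. -/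
theorem active_weight_chernoff {ι : Type*} [DecidableEq ι]
    (E : Finset ι) (C p : ℝ) (hC : 0 < C) (hp : p ∈ Set.Ioc (0 : ℝ) 1)
    (w : ι → ℝ) (hw : ∀ i ∈ E, 0 ≤ w i ∧ w i ≤ C)
    (μ : ℝ) (hμdef : μ = p * (∑ i ∈ E, w i) / C) (hμ : 1 < μ) :
    samplePr E p (fun A => (∑ i ∈ A, w i) < C) ≤ Real.exp (-(μ - 1) ^ 2 / (2 * μ)) := by
  have hmean : p * ∑ i ∈ E, w i = μ * C := by rw [hμdef, div_mul_cancel₀ _ hC.ne']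
  have hp' : p ∈ Set.Icc (0 : ℝ) 1 := Set.Ioc_subset_Icc_self hp
  calc samplePr E p (fun A => (∑ i ∈ A, w i) < C)
      ≤ samplePr E p (fun A => ∑ i ∈ A, w i ≤ C) := samplePr_mono hp' fun _ _ => le_of_lt
    _ ≤ Real.exp (-(μ * C - C) ^ 2 / (2 * C * (μ * C))) :=
        hmean ▸ active_weight_chernoff_general hC hp' hw (by rw [hmean]; positivity)
          (by rw [hmean]; exact le_mul_of_one_le_left hC.le hμ.le)
    _ = Real.exp (-(μ - 1) ^ 2 / (2 * μ)) := by
        congr 1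
        field_simp
end

section
/- Let E be a finite set with functions w, v : E → ℝ, where w e > 0 for all e ∈ E, and suppose there are reals t and ε ≥ 0 with t < v e ≤ (1+ε)·t for every e ∈ E. Let B ⊆ E satisfy w b ≤ w e for every b ∈ B and every e ∈ E \ B, and let A ⊆ E and C ∈ ℝ satisfy ∑_{a∈A} w a ≤ C ≤ ∑_{b∈B} w b. Then there exists T ⊆ B with ∑_{i∈T} w i ≤ ∑_{a∈A} w a and (1+ε)·∑_{i∈T} v i ≥ ∑_{a∈A} v a. -/
open Finset

/-!
Items outside `B` weigh at least as much as those inside, so `∑_A w ≤ ∑_B w` with positive weights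
forces `|A| ≤ |B|`. Trading `A \ B` for equally many items of `B \ A` therefore gives a set `T ⊆ B`
of size `|A|` that weighs no more than `A`. Two items in the same bucket satisfy
`v a ≤ (1 + ε) * v b`, so any size-preserving trade loses at most a factor `1 + ε` in value.
-/

section CardComparison

variable {ι κ M : Type*} [AddCommMonoid M] [PartialOrder M] {s : Finset ι} {t : Finset κ}
  {f : ι → M} {g : κ → M}

theorem sum_le_sum_of_card_eq [IsOrderedAddMonoid M] (hcard : #s = #t)
    (hfg : ∀ i ∈ s, ∀ j ∈ t, f i ≤ g j) : ∑ i ∈ s, f i ≤ ∑ j ∈ t, g j := by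
  let e := equivOfCardEq hcard
  calc ∑ i ∈ s, f i = ∑ i : s, f i := (sum_coe_sort s f).symm
    _ ≤ ∑ i : s, g (e i) := sum_le_sum fun i _ ↦ hfg i i.2 (e i) (e i).2
    _ = ∑ j : t, g j := e.sum_comp fun j ↦ g j
    _ = ∑ j ∈ t, g j := sum_coe_sort t g

theorem sum_lt_sum_of_card_lt [IsOrderedCancelAddMonoid M] (hcard : #s < #t)
    (hg : ∀ j ∈ t, 0 < g j) (hfg : ∀ i ∈ s, ∀ j ∈ t, f i ≤ g j) :
    ∑ i ∈ s, f i < ∑ j ∈ t, g j := by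
  obtain ⟨u, hut, hu⟩ := exists_subset_card_eq hcard.le
  obtain ⟨k, hkt, hku⟩ := exists_mem_notMem_of_card_lt_card (hu.trans_lt hcard)
  calc ∑ i ∈ s, f i ≤ ∑ j ∈ u, g j :=
        sum_le_sum_of_card_eq hu.symm fun i hi j hj ↦ hfg i hi j (hut hj)
    _ < ∑ j ∈ t, g j :=
        sum_lt_sum_of_subset hut hkt hku (hg k hkt) fun j hj _ ↦ (hg j hj).le

end CardComparison

section Exchange

variable {ι M : Type*} [DecidableEq ι] [AddCommMonoid M] [PartialOrder M]
  [IsOrderedCancelAddMonoid M] {A B : Finset ι} {w : ι → M}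

theorem card_le_card_of_sum_le_sum (hpos : ∀ a ∈ A \ B, 0 < w a)
    (hlight : ∀ b ∈ B \ A, ∀ a ∈ A \ B, w b ≤ w a) (hsum : ∑ a ∈ A, w a ≤ ∑ b ∈ B, w b) :
    #A ≤ #B := by
  by_contra! hcard
  have hlt : ∑ b ∈ B \ A, w b < ∑ a ∈ A \ B, w a :=
    sum_lt_sum_of_card_lt (card_sdiff_lt_card_sdiff_iff.2 hcard) hpos hlight
  exact hsum.not_gt (sum_sdiff_lt_sum_sdiff.1 hlt)

theorem exists_subset_card_eq_and_sum_le (hpos : ∀ a ∈ A \ B, 0 < w a)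
    (hlight : ∀ b ∈ B \ A, ∀ a ∈ A \ B, w b ≤ w a) (hsum : ∑ a ∈ A, w a ≤ ∑ b ∈ B, w b) :
    ∃ T ⊆ B, #T = #A ∧ ∑ i ∈ T, w i ≤ ∑ a ∈ A, w a := by
  obtain ⟨T, hABT, hTB, hcard⟩ :=
    exists_subsuperset_card_eq (inter_subset_right : A ∩ B ⊆ B) (card_le_card inter_subset_left)
      (card_le_card_of_sum_le_sum hpos hlight hsum)
  have hAT : A \ T ⊆ A \ B := by
    simpa only [sdiff_inter_self_left] using sdiff_subset_sdiff (Subset.refl A) hABT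
  have hexchange : ∑ i ∈ T \ A, w i ≤ ∑ a ∈ A \ T, w a :=
    sum_le_sum_of_card_eq (card_sdiff_comm hcard) fun b hb a ha ↦
      hlight b (sdiff_subset_sdiff hTB Subset.rfl hb) a (hAT ha)
  exact ⟨T, hTB, hcard, sum_sdiff_le_sum_sdiff.1 hexchange⟩

theorem exists_bucket_substitute_set_general {R : Type*} [NonUnitalNonAssocSemiring R]
    [PartialOrder R] [IsOrderedAddMonoid R] {v : ι → R} {c : R} (hpos : ∀ a ∈ A \ B, 0 < w a)
    (hlight : ∀ b ∈ B \ A, ∀ a ∈ A \ B, w b ≤ w a) (hsum : ∑ a ∈ A, w a ≤ ∑ b ∈ B, w b)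
    (hv : ∀ a ∈ A, ∀ b ∈ B, v a ≤ c * v b) :
    ∃ T ⊆ B, ∑ i ∈ T, w i ≤ ∑ a ∈ A, w a ∧ ∑ a ∈ A, v a ≤ c * ∑ i ∈ T, v i := by
  obtain ⟨T, hTB, hcard, hw⟩ := exists_subset_card_eq_and_sum_le hpos hlight hsum
  refine ⟨T, hTB, hw, ?_⟩
  rw [mul_sum]
  exact sum_le_sum_of_card_eq hcard.symm fun a ha b hb ↦ hv a ha b (hTB hb)

end Exchange

/-- If all values in `E` lie in the bucket `(t, (1+ε)·t]`, `B` consists of the lightest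
items of `E`, and `∑_A w ≤ C ≤ ∑_B w`, then there is `T ⊆ B` with
`∑_T w ≤ ∑_A w` and `(1+ε)·∑_T v ≥ ∑_A v`. -/
theorem exists_bucket_substitute_set {ι : Type*} [DecidableEq ι]
    (E : Finset ι) (w v : ι → ℝ) (hw : ∀ e ∈ E, 0 < w e)
    (t ε : ℝ) (hε : 0 ≤ ε)
    (hv : ∀ e ∈ E, t < v e ∧ v e ≤ (1 + ε) * t)
    (B : Finset ι) (hB : B ⊆ E)
    (hBlight : ∀ b ∈ B, ∀ e ∈ E \ B, w b ≤ w e)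
    (A : Finset ι) (hA : A ⊆ E) (C : ℝ)
    (hAC : (∑ a ∈ A, w a) ≤ C) (hCB : C ≤ ∑ b ∈ B, w b) :
    ∃ T ⊆ B, (∑ i ∈ T, w i) ≤ (∑ a ∈ A, w a) ∧
      (∑ a ∈ A, v a) ≤ (1 + ε) * ∑ i ∈ T, v i := by
  have hvalue : ∀ a ∈ A, ∀ b ∈ B, v a ≤ (1 + ε) * v b := fun a ha b hb ↦
    calc v a ≤ (1 + ε) * t := (hv a (hA ha)).2
      _ ≤ (1 + ε) * v b := by gcongr; exact (hv b (hB hb)).1.le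
  exact exists_bucket_substitute_set_general (fun a ha ↦ hw a (hA (sdiff_subset ha)))
    (fun b hb a ha ↦ hBlight b (sdiff_subset hb) a (sdiff_subset_sdiff hA Subset.rfl ha))
    (hAC.trans hCB) hvalue
end
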